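/- Derivative at 1 of the Chassaing–Durhuus-type generating function: fix integers ℓ ≥ r. For x ∈ [0, 1) set a(x) := (−1 + √(1 + 8/(1−x)))/2 and f_{ℓ,r}(x) := 1 − 2 / ((ℓ − r + a(x)) · (ℓ − r + 1 + a(x))). Then (1 − f_{ℓ,r}(x)) / (1 − x) → 1 as x → 1 from the left; in particular, extending f_{ℓ,r} by f_{ℓ,r}(1) := 1, the left derivative of f_{ℓ,r} at 1 equals 1. -/

import Mathlib

/-!
Since `a(a+1) = 2/(1-x)`, the difference quotient equals, with `d = ℓ - r`,
`a(a+1) / ((d+a)(d+1+a)) = (1 + d/a)⁻¹ (1 + d/(a+1))⁻¹`, and `a(x) → ∞` as `x → 1⁻`,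
so it tends to `1`. The left derivative is the same limit, read as the limit of slopes.
-/

open Filter Topology

/-- For `x ∈ [0,1)`, the positive root of `a(a+1) = 2/(1-x)`. -/
noncomputable def aCD (x : ℝ) : ℝ := (-1 + Real.sqrt (1 + 8 / (1 - x))) / 2

/-- The Chassaing–Durhuus-type generating function `f_{ℓ,r}` on `[0,1)`: the
probability generating function of the number of first vertices with label `r` when
exploring, from the root, a critical Geometric Galton–Watson tree with root label `ℓ`
and i.i.d. uniform `{-1,0,1}` label increments. -/
noncomputable def fCD (ℓ r : ℤ) (x : ℝ) : ℝ :=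
  1 - 2 / ((((ℓ:ℝ) - (r:ℝ)) + aCD x) * (((ℓ:ℝ) - (r:ℝ)) + 1 + aCD x))

theorem aCD_pos {x : ℝ} (hx : x < 1) : 0 < aCD x := by
  have h : 0 < 8 / (1 - x) := div_pos (by norm_num) (by linarith)
  have h1 : 1 < Real.sqrt (1 + 8 / (1 - x)) := by
    rw [Real.lt_sqrt (by norm_num)]
    linarith
  unfold aCD
  linarith

theorem aCD_mul_succ {x : ℝ} (hx : x < 1) : aCD x * (aCD x + 1) = 2 / (1 - x) := by
  have h : 0 < 8 / (1 - x) := div_pos (by norm_num) (by linarith)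
  have hs := Real.sq_sqrt (by linarith : 0 ≤ 1 + 8 / (1 - x))
  have h8 : 8 / (1 - x) = 4 * (2 / (1 - x)) := by ring
  unfold aCD
  linear_combination hs / 4 + h8 / 4

theorem tendsto_aCD_atTop : Tendsto aCD (𝓝[<] 1) atTop := by
  have h0 : Tendsto (fun x : ℝ => 1 - x) (𝓝[<] 1) (𝓝[>] 0) := by
    refine tendsto_nhdsWithin_iff.2 ⟨?_, ?_⟩
    · have : Tendsto (fun x : ℝ => 1 - x) (𝓝 1) (𝓝 (1 - 1)) :=
        (continuous_const.sub continuous_id).tendsto 1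
      rw [sub_self] at this
      exact this.mono_left nhdsWithin_le_nhds
    · filter_upwards [self_mem_nhdsWithin] with x hx
      exact sub_pos.2 (Set.mem_Iio.1 hx)
  have h1 : Tendsto (fun x : ℝ => 1 + 8 / (1 - x)) (𝓝[<] 1) atTop := by
    simp only [div_eq_mul_inv]
    exact tendsto_atTop_add_const_left _ _
      ((tendsto_inv_nhdsGT_zero.comp h0).const_mul_atTop (by norm_num))
  exact (tendsto_atTop_add_const_left _ (-1)
    (Real.tendsto_sqrt_atTop.comp h1)).atTop_div_const (by norm_num)

theorem fCD_quotient_eq {ℓ r : ℤ} (hlr : r ≤ ℓ) {x : ℝ} (hx : x < 1) :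
    (1 - fCD ℓ r x) / (1 - x) =
      (1 + ((ℓ:ℝ) - r) / aCD x)⁻¹ * (1 + ((ℓ:ℝ) - r) / (aCD x + 1))⁻¹ := by
  have hd : (0:ℝ) ≤ (ℓ:ℝ) - r := sub_nonneg.2 (by exact_mod_cast hlr)
  have ha := aCD_pos hx
  have hm := aCD_mul_succ hx
  have hx' : 0 < 1 - x := sub_pos.2 hx
  unfold fCD
  generalize (ℓ:ℝ) - r = d at *
  generalize aCD x = a at *
  have e1 : (1 + d / a)⁻¹ = a / (d + a) := by field_simp; ring
  have e2 : (1 + d / (a + 1))⁻¹ = (a + 1) / (d + 1 + a) := by field_simp; ring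
  rw [e1, e2, div_mul_div_comm, hm, sub_sub_cancel, div_right_comm]

/-- Derivative at `1` of the Chassaing–Durhuus-type generating function: for `ℓ ≥ r`,
`(1 - f_{ℓ,r}(x)) / (1 - x) → 1` as `x → 1⁻` (within `[0,1)`); in particular, extending
`f_{ℓ,r}` by `f_{ℓ,r}(1) := 1`, the left derivative of `f_{ℓ,r}` at `1` equals `1`. -/
theorem fCD_deriv_one (ℓ r : ℤ) (hlr : r ≤ ℓ) :
    Tendsto (fun x => (1 - fCD ℓ r x) / (1 - x)) (𝓝[Set.Ico (0:ℝ) 1] 1) (𝓝 1) ∧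
    HasDerivWithinAt (fun x => if x = 1 then (1:ℝ) else fCD ℓ r x) 1
      (Set.Ico (0:ℝ) 1) 1 := by
  have key : Tendsto (fun x => (1 - fCD ℓ r x) / (1 - x)) (𝓝[Set.Ico (0:ℝ) 1] 1) (𝓝 1) := by
    have ha : Tendsto aCD (𝓝[Set.Ico (0:ℝ) 1] 1) atTop :=
      tendsto_aCD_atTop.mono_left (nhdsWithin_mono _ fun _ hx => hx.2)
    have ha' := tendsto_atTop_add_const_right _ (1:ℝ) ha
    have t1 := ((ha.const_div_atTop ((ℓ:ℝ) - r)).const_add 1).inv₀ (by norm_num)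
    have t2 := ((ha'.const_div_atTop ((ℓ:ℝ) - r)).const_add 1).inv₀ (by norm_num)
    have t := t1.mul t2
    norm_num only at t
    refine t.congr' ?_
    filter_upwards [self_mem_nhdsWithin] with x hx
    exact (fCD_quotient_eq hlr hx.2).symm
  refine ⟨key, ?_⟩
  -- `1 ∉ [0,1)`, so the slope criterion needs no puncturing of the set.
  rw [hasDerivWithinAt_iff_tendsto_slope' (by simp)]
  refine key.congr' ?_
  filter_upwards [self_mem_nhdsWithin] with x hx
  rw [slope_def_field, if_pos rfl, if_neg hx.2.ne, ← neg_sub (fCD ℓ r x), ← neg_sub x 1,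
    neg_div_neg_eq]
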